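/- The 8-ary signature f_8 satisfies the strong Bell property: for every pair of distinct indices {i, j} ⊆ {1, …, 8} and every Bell binary signature b ∈ B, there exist a nonzero real number λ and a partition of the six remaining indices into three pairs {p_1, q_1}, {p_2, q_2}, {p_3, q_3} such that (∂^b_{ij} f_8)(y) = λ·b(y_{p_1}, y_{q_1})·b(y_{p_2}, y_{q_2})·b(y_{p_3}, y_{q_3}) for all assignments y to the remaining six variables; that is, ∂^b_{ij} f_8 is a nonzero real multiple of a tensor power of b. -/

import Mathlib

namespace Stmt19

/-- The bit `b` as an element of `ℤ/2ℤ`. -/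
def bz (b : Bool) : ZMod 2 := if b then 1 else 0

/-- The 8-ary signature `f₈`: the 0-1 indicator of the set
`T = {x ∈ (ℤ/2ℤ)⁸ : x₁+x₂+x₃+x₄ = 0, x₅+x₆+x₇+x₈ = 0, x₁+x₂+x₅+x₆ = 0,
x₁+x₃+x₅+x₇ = 0}`. -/
def f8 (x : Fin 8 → Bool) : ℝ :=
  if bz (x 0) + bz (x 1) + bz (x 2) + bz (x 3) = 0 ∧
      bz (x 4) + bz (x 5) + bz (x 6) + bz (x 7) = 0 ∧
      bz (x 0) + bz (x 1) + bz (x 4) + bz (x 5) = 0 ∧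
      bz (x 0) + bz (x 2) + bz (x 4) + bz (x 6) = 0
  then 1 else 0

/-- The Bell binary signature `=₂`, with truth table `(1,0,0,1)`. -/
def eqB (x y : Bool) : ℝ := if x = y then 1 else 0

/-- The Bell binary signature `=₂⁻`, with truth table `(1,0,0,-1)`. -/
def eqmB (x y : Bool) : ℝ := if x = y then (if x then -1 else 1) else 0

/-- The Bell binary signature `≠₂`, with truth table `(0,1,1,0)`. -/
def neqB (x y : Bool) : ℝ := if x = y then 0 else 1

/-- The Bell binary signature `≠₂⁻`, with truth table `(0,1,-1,0)`. -/
def neqmB (x y : Bool) : ℝ := if x = y then 0 else (if x then -1 else 1)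

/-- The merge `∂ᵇ_{ij} f` of `f` at the distinct indices `i, j` using the binary
signature `b`: `(∂ᵇ_{ij} f)(y) = ∑_{a,c} b a c · f(y extended by x_i = a, x_j = c)`. -/
def mergeB (f : (Fin 8 → Bool) → ℝ) (i j : Fin 8) (b : Bool → Bool → ℝ)
    (y : {k : Fin 8 // k ≠ i ∧ k ≠ j} → Bool) : ℝ :=
  ∑ a : Bool, ∑ c : Bool,
    b a c * f fun k => if h : k = i then a else if h' : k = j then c else y ⟨k, h, h'⟩

/-!
Each Bell signature has the form `b a c = χ a` if `a + c = ε`, and `0` otherwise, for a character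
`χ` of `ℤ/2ℤ` and some `ε`. Let `T` be the code with indicator `f₈`. In a word of `T` the sums
`x_{p t} + x_{q t}` over three suitable pairs all equal `x_i + x_j`, and `x_i = ∑ x_{p t}`; these
conditions characterise `T`. Merging with `b` therefore forces `x_{p t} + x_{q t} = ε` and
contributes `χ (x_i) = χ (∑ x_{p t}) = ∏ χ (x_{p t})`, which is the tensor power of `b` on the
pairs. It is enough to find the pairs for one `{i, j}`, because the symmetries of `T` act
2-transitively: writing indices in binary identifies them with `𝔽₈`, and the maps `k ↦ u k + i`,
`u ≠ 0`, preserve `T`.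
-/

section CharSignature

variable {G R ι : Type*} [DecidableEq G] [CommSemiring R] [Fintype ι]

/-- The binary signature on `G` supported on `a + c = ε`, where its value is `χ a`. Over
`G = ℤ/2ℤ` and `R = ℝ` these are exactly the four Bell signatures. -/
def charSignature [AddCommMonoid G] (χ : AddChar G R) (ε a c : G) : R :=
  if a + c = ε then χ a else 0

theorem prod_charSignature [AddCommMonoid G] (χ : AddChar G R) (ε : G) (p q : ι → G) :
    ∏ t, charSignature χ ε (p t) (q t) = if ∀ t, p t + q t = ε then χ (∑ t, p t) else 0 := by
  have map_sum : χ (∑ t, p t) = ∏ t, χ (p t) :=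
    map_prod χ.toMonoidHom (fun t => Multiplicative.ofAdd (p t)) Finset.univ
  simp only [charSignature, Fintype.prod_ite_zero, map_sum]

variable [AddCommGroup G] [Fintype G]

theorem sum_charSignature_mul (χ : AddChar G R) (ε : G) (g : G → G → R) :
    ∑ a, ∑ c, charSignature χ ε a c * g a c = ∑ a, χ a * g a (ε - a) := by
  simp only [charSignature, ← eq_sub_iff_add_eq', ite_mul, zero_mul, Finset.sum_ite_eq',
    Finset.mem_univ, if_true]

theorem sum_charSignature_mul_ite (χ : AddChar G R) (ε : G) (p q : ι → G) :
    ∑ a, ∑ c, charSignature χ ε a c *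
        (if (∀ t, p t + q t = a + c) ∧ a = ∑ t, p t then 1 else 0) =
      ∏ t, charSignature χ ε (p t) (q t) := by
  rw [sum_charSignature_mul, prod_charSignature]
  simp only [add_sub_cancel, and_comm (b := _ = ∑ t, p t), ite_and, mul_ite, mul_one, mul_zero,
    Finset.sum_ite_eq', Finset.mem_univ, if_true]

end CharSignature

theorem exists_eq_charSignature_of_bell {b : Bool → Bool → ℝ}
    (hb : b = eqB ∨ b = eqmB ∨ b = neqB ∨ b = neqmB) :
    ∃ (χ : AddChar (ZMod 2) ℝ) (ε : ZMod 2), ∀ a c, b a c = charSignature χ ε (bz a) (bz c) := by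
  let sign : AddChar (ZMod 2) ℝ := AddChar.zmodChar 2 (neg_one_sq (R := ℝ))
  have sign_one : sign 1 = -1 := by
    rw [AddChar.zmodChar_apply, ZMod.val_one, pow_one]
  rcases hb with rfl | rfl | rfl | rfl
  · exact ⟨1, 0, by simp +decide [eqB, charSignature, bz]⟩
  · exact ⟨sign, 0, by simp +decide [eqmB, charSignature, bz, sign_one]⟩
  · exact ⟨1, 1, by simp +decide [neqB, charSignature, bz]⟩
  · exact ⟨sign, 1, by simp +decide [neqmB, charSignature, bz, sign_one]⟩

theorem sum_bell_mul_ite {ι : Type*} [Fintype ι] {b : Bool → Bool → ℝ}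
    (hb : b = eqB ∨ b = eqmB ∨ b = neqB ∨ b = neqmB) (p q : ι → Bool) :
    ∑ a, ∑ c, b a c * (if (∀ t, bz (p t) + bz (q t) = bz a + bz c) ∧ bz a = ∑ t, bz (p t)
        then 1 else 0) =
      ∏ t, b (p t) (q t) := by
  obtain ⟨χ, ε, hχ⟩ := exists_eq_charSignature_of_bell hb
  have bz_bijective : Function.Bijective bz := by decide
  simp only [hχ, ← sum_charSignature_mul_ite, ← bz_bijective.sum_comp]

/-- The group of permutations of the index set that preserve a set `T` of words. -/
def indexSymmetries {ι α : Type*} (T : Set (ι → α)) : Subgroup (Equiv.Perm ι) where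
  carrier := {σ | ∀ z, z ∘ σ ∈ T ↔ z ∈ T}
  one_mem' _ := Iff.rfl
  mul_mem' {σ _} hσ hτ z := (hτ (z ∘ σ)).trans (hσ z)
  inv_mem' {σ} hσ z := by
    simpa only [Function.comp_assoc, ← Equiv.Perm.coe_mul, inv_mul_cancel, Equiv.Perm.coe_one,
      Function.comp_id] using (hσ (z ∘ ⇑σ⁻¹)).symm

/-- The set `T` whose indicator is `f₈`, as a set of words over `ℤ/2ℤ`: the first-order
Reed–Muller code of length 8. -/
def f8Code : Set (Fin 8 → ZMod 2) :=
  {z | z 0 + z 1 + z 2 + z 3 = 0 ∧ z 4 + z 5 + z 6 + z 7 = 0 ∧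
    z 0 + z 1 + z 4 + z 5 = 0 ∧ z 0 + z 2 + z 4 + z 6 = 0}

theorem mem_f8Code {z : Fin 8 → ZMod 2} :
    z ∈ f8Code ↔ z 0 + z 1 + z 2 + z 3 = 0 ∧ z 4 + z 5 + z 6 + z 7 = 0 ∧
      z 0 + z 1 + z 4 + z 5 = 0 ∧ z 0 + z 2 + z 4 + z 6 = 0 :=
  Iff.rfl

theorem f8_eq_ite {x : Fin 8 → Bool} {P : Prop} {_ : Decidable P} (h : bz ∘ x ∈ f8Code ↔ P) :
    f8 x = if P then 1 else 0 :=
  if_congr h rfl rfl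

/-- Translation by `i` of the indices, viewed as binary vectors. -/
def translation (i : Fin 8) : Equiv.Perm (Fin 8) :=
  Function.Involutive.toPerm (i ^^^ ·) (show ∀ k, i ^^^ (i ^^^ k) = k by decide +revert)

/-- Multiplication by the generator `α` of `𝔽₈ˣ` with `α³ = α + 1`, where the index with binary
digits `d₂d₁d₀` stands for the field element `d₂α² + d₁α + d₀`. -/
def singerCycle : Equiv.Perm (Fin 8) :=
  [1, 2, 4, 3, 6, 7, 5].formPerm

theorem translation_apply (i k : Fin 8) : translation i k = i ^^^ k :=
  rfl

theorem translation_mem_indexSymmetries_f8Code (i : Fin 8) :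
    translation i ∈ indexSymmetries f8Code := by
  intro z
  simp only [mem_f8Code, Function.comp_apply, translation_apply]
  -- each translated parity check is a sum of the four original ones, and conversely
  fin_cases i <;> simp only [Fin.reduceFinMk, Fin.zero_eta, Fin.mk_one, Fin.reduceXor] <;> grind

theorem singerCycle_mem_indexSymmetries_f8Code : singerCycle ∈ indexSymmetries f8Code := by
  intro z
  have singerCycle_eq : ⇑singerCycle = ![0, 2, 4, 6, 3, 1, 7, 5] := by decide
  simp only [mem_f8Code, Function.comp_apply, singerCycle_eq, Matrix.cons_val]
  grind

theorem exists_singerCycle_pow_apply_one {d : Fin 8} (hd : d ≠ 0) :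
    ∃ m : ℕ, (singerCycle ^ m) 1 = d := by
  have isCycle : singerCycle.IsCycle := List.isCycle_formPerm (by decide) (by decide)
  have moves_nonzero : ∀ k : Fin 8, k ≠ 0 → singerCycle k ≠ k := by decide
  exact isCycle.exists_pow_eq (moves_nonzero 1 one_ne_zero) (moves_nonzero d hd)

theorem exists_mem_indexSymmetries_f8Code {i j : Fin 8} (hij : i ≠ j) :
    ∃ σ ∈ indexSymmetries f8Code, σ 0 = i ∧ σ 1 = j := by
  have xor_ne_zero : i ^^^ j ≠ 0 := by decide +revert
  obtain ⟨m, hm⟩ := exists_singerCycle_pow_apply_one xor_ne_zero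
  have pow_apply_zero : (singerCycle ^ m) 0 = 0 :=
    Equiv.Perm.pow_apply_eq_self_of_apply_eq_self (by decide) m
  refine ⟨translation i * singerCycle ^ m, mul_mem (translation_mem_indexSymmetries_f8Code i)
    (pow_mem singerCycle_mem_indexSymmetries_f8Code m), ?_, ?_⟩
  · rw [Equiv.Perm.mul_apply, pow_apply_zero]
    exact (by decide : ∀ i : Fin 8, i ^^^ 0 = i) i
  · rw [Equiv.Perm.mul_apply, hm]
    exact (translation i).left_inv j

theorem mem_f8Code_iff_pairs (z : Fin 8 → ZMod 2) :
    z ∈ f8Code ↔ (∀ t : Fin 3, z (![2, 4, 6] t) + z (![3, 5, 7] t) = z 0 + z 1) ∧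
      z 0 = ∑ t : Fin 3, z (![2, 4, 6] t) := by
  simp only [mem_f8Code, Fin.forall_fin_succ, Fin.forall_fin_zero, and_true, Fin.succ_zero_eq_one,
    Fin.succ_one_eq_two, Fin.sum_univ_three, Matrix.cons_val]
  grind

theorem exists_pairing {i j : Fin 8} (hij : i ≠ j) :
    ∃ p q : Fin 3 → {k : Fin 8 // k ≠ i ∧ k ≠ j},
      Function.Injective p ∧ Function.Injective q ∧ (∀ s t, p s ≠ q t) ∧
      ∀ z : Fin 8 → ZMod 2, z ∈ f8Code ↔
        (∀ t, z (p t) + z (q t) = z i + z j) ∧ z i = ∑ t, z (p t) := by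
  obtain ⟨σ, hσ, rfl, rfl⟩ := exists_mem_indexSymmetries_f8Code hij
  let restrict : {k : Fin 8 // k ≠ 0 ∧ k ≠ 1} ≃ {k : Fin 8 // k ≠ σ 0 ∧ k ≠ σ 1} :=
    σ.subtypeEquiv fun k => by simp only [ne_eq, σ.injective.eq_iff]
  let p₀ (t : Fin 3) : {k : Fin 8 // k ≠ 0 ∧ k ≠ 1} := ⟨![2, 4, 6] t, by decide +revert⟩
  let q₀ (t : Fin 3) : {k : Fin 8 // k ≠ 0 ∧ k ≠ 1} := ⟨![3, 5, 7] t, by decide +revert⟩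
  refine ⟨restrict ∘ p₀, restrict ∘ q₀, restrict.injective.comp (by decide),
    restrict.injective.comp (by decide), fun s t => restrict.injective.ne (by decide +revert),
    fun z => ?_⟩
  exact (hσ z).symm.trans (mem_f8Code_iff_pairs (z ∘ σ))

/-- `f₈` satisfies the strong Bell property: for all distinct indices `i, j` and every
Bell binary signature `b`, the merge `∂ᵇ_{ij} f₈` is a nonzero real multiple of a
tensor power of `b`, i.e. there are `λ ≠ 0` and a partition of the six remaining
indices into three pairs `{p t, q t}` with
`(∂ᵇ_{ij} f₈)(y) = λ · ∏ t, b (y (p t)) (y (q t))`. -/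
theorem f8_strong_bell (i j : Fin 8) (hij : i ≠ j) (b : Bool → Bool → ℝ)
    (hb : b = eqB ∨ b = eqmB ∨ b = neqB ∨ b = neqmB) :
    ∃ lam : ℝ, lam ≠ 0 ∧
      ∃ p q : Fin 3 → {k : Fin 8 // k ≠ i ∧ k ≠ j},
        Function.Injective p ∧ Function.Injective q ∧ (∀ s t, p s ≠ q t) ∧
        ∀ y, mergeB f8 i j b y = lam * ∏ t : Fin 3, b (y (p t)) (y (q t)) := by
  obtain ⟨p, q, hp, hq, hpq, mem_f8Code_iff⟩ := exists_pairing hij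
  refine ⟨1, one_ne_zero, p, q, hp, hq, hpq, fun y => ?_⟩
  rw [one_mul, ← sum_bell_mul_ite hb]
  refine Finset.sum_congr rfl fun a _ => Finset.sum_congr rfl fun c _ => ?_
  congr 1
  refine f8_eq_ite ((mem_f8Code_iff _).trans ?_)
  simp only [Function.comp_apply, dif_pos, dif_neg (p _).2.1, dif_neg (p _).2.2,
    dif_neg (q _).2.1, dif_neg (q _).2.2, dif_neg hij.symm]

end Stmt19
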